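/- Let κ and λ be infinite cardinals with κ ≤ λ ≤ 2^κ. Then there exist two families C and L of mutually non-homeomorphic pathwise connected, scattered T₀-spaces of cardinality κ and weight λ such that |C| = |L| = 2^λ, all spaces in C are compact, and if κ ≤ 𝔠 (where 𝔠 = 2^{ℵ₀}) or 2^κ < 2^λ, then all spaces in L are locally pathwise connected. -/

import Mathlib

open Cardinal Set Topology

/-- The weight of a topological space: the least cardinality of a basis for its topology. -/
noncomputable def tweight (X : Type) [TopologicalSpace X] : Cardinal :=
  sInf { c : Cardinal | ∃ B : Set (Set X), TopologicalSpace.IsTopologicalBasis B ∧ #B = c }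

/-- A space is scattered if every nonempty subset has a point isolated in that subset. -/
def Scattered (X : Type) [TopologicalSpace X] : Prop :=
  ∀ S : Set X, S.Nonempty → ∃ x ∈ S, ∃ U : Set X, IsOpen U ∧ U ∩ S = {x}

/-- Strong zero-dimensionality: every closed set contained in an open set can be
separated from its complement by an open-closed set. -/
def StronglyZeroDimensional (X : Type) [TopologicalSpace X] : Prop :=
  ∀ A U : Set X, IsClosed A → IsOpen U → A ⊆ U →
    ∃ V : Set X, IsOpen V ∧ IsClosed V ∧ A ⊆ V ∧ V ⊆ U

/-- A space is hereditarily paracompact if every subspace is paracompact. -/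
def HereditarilyParacompact (X : Type) [TopologicalSpace X] : Prop :=
  ∀ S : Set X, ParacompactSpace S

/-- A space is perfectly normal iff it is normal and every closed set is a Gδ-set. -/
def PerfectlyNormal (X : Type) [TopologicalSpace X] : Prop :=
  NormalSpace X ∧ ∀ C : Set X, IsClosed C → IsGδ C

/-- A Hausdorff space is almost discrete iff the complement of some point is discrete. -/
def AlmostDiscrete (X : Type) [TopologicalSpace X] : Prop :=
  T2Space X ∧ ∃ x : X, DiscreteTopology ({x}ᶜ : Set X)

/-- A space is almost metrizable iff it is perfectly normal and the complement of some
point is metrizable. -/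
def AlmostMetrizable (X : Type) [TopologicalSpace X] : Prop :=
  PerfectlyNormal X ∧ ∃ x : X, TopologicalSpace.MetrizableSpace ({x}ᶜ : Set X)

/-- There is a family of `n` pairwise non-homeomorphic spaces, all with property `P`. -/
def ExistsNonHomeoFamily (n : Cardinal) (P : (X : Type) → TopologicalSpace X → Prop) : Prop :=
  ∃ (ι : Type) (F : ι → Type) (t : (i : ι) → TopologicalSpace (F i)),
    #ι = n ∧ (∀ i, P (F i) (t i)) ∧
      ∀ i j, i ≠ j → IsEmpty (@Homeomorph (F i) (F j) (t i) (t j))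

/-- Every family of pairwise non-homeomorphic spaces with property `P` has at most `n`
members. -/
def NonHomeoUpperBound (n : Cardinal) (P : (X : Type) → TopologicalSpace X → Prop) : Prop :=
  ∀ (ι : Type) (F : ι → Type) (t : (i : ι) → TopologicalSpace (F i)),
    (∀ i, P (F i) (t i)) →
    (∀ i j, i ≠ j → IsEmpty (@Homeomorph (F i) (F j) (t i) (t j))) → #ι ≤ n

/-- There are precisely `n` spaces with property `P`, up to homeomorphism. -/
def PreciselyNonHomeo (n : Cardinal) (P : (X : Type) → TopologicalSpace X → Prop) : Prop :=
  ExistsNonHomeoFamily n P ∧ NonHomeoUpperBound n P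

/-!
Every space of the family lives on one poset of cardinality `κ`: a well-ordered chain of type `κ`, a
leaf above each point of the chain, one more point `limit` above the whole chain, and a greatest
element. A free filter `F` on `κ` refines the lower-set topology: neighbourhoods of `limit` must
contain `F`-almost all leaves. The least element is generic, so all nonempty open sets are pathwise
connected, and the greatest element lies in no proper open set, so the space is compact. The
specialization order is the order of the poset, which has no nontrivial automorphism; hence a
homeomorphism is the identity and the topology determines `F`. An independent family of `λ` subsets
of `κ` yields `2 ^ λ` free filters, none of which has a basis of fewer than `λ` sets.
-/

open Filter Function

theorem ExistsNonHomeoFamily.mono {n : Cardinal} {P Q : (X : Type) → TopologicalSpace X → Prop}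
    (h : ExistsNonHomeoFamily n P) (hPQ : ∀ X t, P X t → Q X t) : ExistsNonHomeoFamily n Q :=
  let ⟨ι, X, t, hι, hP, hX⟩ := h
  ⟨ι, X, t, hι, fun i => hPQ _ _ (hP i), hX⟩

/-! ### Independent families -/

section IndependentFamily

universe u

variable {I K : Type*}

/-- The Boolean combination of the sets `A i`, `i ∈ t`, in which `A i` enters positively if `i ∈ J`
and through its complement if `i ∉ J`. -/
def booleanCell (A : I → Set K) (J : Set I) (t : Finset I) : Set K :=
  {k | ∀ i ∈ t, (k ∈ A i ↔ i ∈ J)}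

/-- Independence of a family of sets, in the form which asks all finite Boolean combinations to be
infinite, rather than merely nonempty. -/
def IsIndependentFamily (A : I → Set K) : Prop :=
  ∀ (J : Set I) (t : Finset I), (booleanCell A J t).Infinite

/-- The free filter on `K` generated by the sets `A i` for `i ∈ J` and `(A i)ᶜ` for `i ∉ J`. -/
def patternFilter (A : I → Set K) (J : Set I) : Filter K :=
  cofinite ⊓ ⨅ t, 𝓟 (booleanCell A J t)

theorem booleanCell_antitone (A : I → Set K) (J : Set I) : Antitone (booleanCell A J) :=
  fun _ _ hst _ hk i hi => hk i (hst hi)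

theorem patternFilter_le_cofinite (A : I → Set K) (J : Set I) : patternFilter A J ≤ cofinite :=
  inf_le_left

theorem booleanCell_mem_patternFilter (A : I → Set K) (J : Set I) (t : Finset I) :
    booleanCell A J t ∈ patternFilter A J :=
  mem_inf_of_right (mem_iInf_of_mem t (mem_principal_self _))

theorem patternFilter_hasBasis (A : I → Set K) (J : Set I) :
    (patternFilter A J).HasBasis (fun _ : Finset K × Finset I => True)
      fun p => booleanCell A J p.2 \ p.1 := by
  refine (hasBasis_cofinite.inf
    (hasBasis_iInf_principal (booleanCell_antitone A J).directed_ge)).to_hasBasis ?_ ?_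
  · rintro ⟨N, t⟩ ⟨hN, -⟩
    exact ⟨(hN.toFinset, t), trivial, fun k hk => ⟨by simpa using hk.2, hk.1⟩⟩
  · rintro ⟨N, t⟩ -
    exact ⟨(N, t), ⟨N.finite_toSet, trivial⟩, fun k hk => ⟨hk.2, hk.1⟩⟩

theorem IsIndependentFamily.comp_injective {I' : Type*} {A : I → Set K}
    (hA : IsIndependentFamily A) {f : I' → I} (hf : Injective f) :
    IsIndependentFamily (A ∘ f) := by
  intro J t
  refine (hA (f '' J) (t.map ⟨f, hf⟩)).mono fun k hk i hi => ?_
  simpa only [comp_apply, Embedding.coeFn_mk, hf.mem_set_image]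
    using hk (f i) (Finset.mem_map_of_mem _ hi)

theorem IsIndependentFamily.preimage_equiv {K' : Type*} {A : I → Set K}
    (hA : IsIndependentFamily A) (e : K' ≃ K) : IsIndependentFamily fun i => e ⁻¹' A i :=
  fun J t => (hA J t).preimage (by simp [e.surjective.range_eq])

theorem IsIndependentFamily.patternFilter_neBot {A : I → Set K} (hA : IsIndependentFamily A)
    (J : Set I) : (patternFilter A J).NeBot :=
  (patternFilter_hasBasis A J).neBot_iff.2 fun {p} _ =>
    ((hA J p.2).sdiff p.1.finite_toSet).nonempty

theorem IsIndependentFamily.patternFilter_injective {A : I → Set K} (hA : IsIndependentFamily A) :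
    Injective (patternFilter A) := by
  intro J J' h
  ext i
  have := hA.patternFilter_neBot J
  obtain ⟨k, hk, hk'⟩ := Filter.nonempty_of_mem <|
    inter_mem (booleanCell_mem_patternFilter A J {i})
    (h ▸ booleanCell_mem_patternFilter A J' {i})
  exact (hk i (Finset.mem_singleton_self i)).symm.trans (hk' i (Finset.mem_singleton_self i))

theorem IsIndependentFamily.finite_setOf_subset_booleanCell {A : I → Set K}
    (hA : IsIndependentFamily A) {J : Set I} {V : Set K} (hV : V ∈ patternFilter A J) :
    {i | V ⊆ booleanCell A J {i}}.Finite := by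
  classical
  obtain ⟨⟨N, t⟩, -, hNt⟩ := (patternFilter_hasBasis A J).mem_iff.1 hV
  refine t.finite_toSet.subset fun i hi => by_contra fun hit => ?_
  obtain ⟨k, hk, hkN⟩ :=
    ((hA {j | j ∈ J ↔ j ≠ i} (insert i t)).sdiff N.finite_toSet).nonempty
  have hkt : k ∈ booleanCell A J t := fun j hj => by
    simpa [ne_of_mem_of_not_mem hj hit] using hk j (Finset.mem_insert_of_mem hj)
  have hki : k ∈ A i ↔ i ∈ J := hi (hNt ⟨hkt, hkN⟩) i (Finset.mem_singleton_self i)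
  have hki' : k ∈ A i ↔ i ∉ J := by simpa using hk i (Finset.mem_insert_self i t)
  exact iff_not_self (hki.symm.trans hki')

/-- A member of a basis lies in only finitely many of the generating sets, but every generating set
contains a member of the basis. -/
theorem IsIndependentFamily.mk_le_of_hasBasis {I β : Type u} [Infinite I] {A : I → Set K}
    (hA : IsIndependentFamily A) {J : Set I} {p : β → Prop} {V : β → Set K}
    (hV : (patternFilter A J).HasBasis p V) : #I ≤ #{b // p b} := by
  let members (b : {b // p b}) : Finset I :=
    (hA.finite_setOf_subset_booleanCell (hV.mem_of_mem b.2)).toFinset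
  have hcover : ⋃ b, (members b : Set I) = Set.univ := by
    refine eq_univ_of_forall fun i => ?_
    obtain ⟨b, hb, hbi⟩ := hV.mem_iff.1 (booleanCell_mem_patternFilter A J {i})
    exact mem_iUnion.2 ⟨⟨b, hb⟩, by simpa [members] using hbi⟩
  exact (le_range_of_union_finset_eq_univ members hcover).trans mk_range_le

open Classical in
/-- The family, indexed by all subsets `X` of `K`, of the sets of pairs `(S, T)` for which `T`
contains the trace of `X` on `S`; this is Hausdorff's example of an independent family. -/
def traceFamily (K : Type*) (X : Set K) : Set (Finset K × Finset (Finset K)) :=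
  {p | p.1.filter (· ∈ X) ∈ p.2}

open Classical in
theorem eventually_injOn_filter_mem (t : Finset (Set K)) :
    ∀ᶠ S : Finset K in atTop, InjOn (fun X : Set K => S.filter (· ∈ X)) t := by
  have hpair (X Y : Set K) : ∀ᶠ S : Finset K in atTop,
      S.filter (· ∈ X) = S.filter (· ∈ Y) → X = Y := by
    by_cases hXY : X = Y
    · exact Eventually.of_forall fun _ _ => hXY
    obtain ⟨x, hx⟩ : ∃ x, ¬(x ∈ X ↔ x ∈ Y) := not_forall.1 fun h => hXY (Set.ext h)
    filter_upwards [eventually_ge_atTop {x}] with S hS hfilter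
    have hxS : x ∈ S := hS (Finset.mem_singleton_self x)
    exact absurd (by simpa [hxS] using Finset.ext_iff.1 hfilter x) hx
  filter_upwards [(Finset.eventually_all t).2 fun X _ =>
    (Finset.eventually_all t).2 fun Y _ => hpair X Y] with S hS X hX Y hY using hS X hX Y hY

instance [Infinite K] : NoMaxOrder (Finset K) where
  exists_gt S :=
    let ⟨x, hx⟩ := Infinite.exists_notMem_finset S
    ⟨S.cons x hx, Finset.ssubset_cons hx⟩

theorem isIndependentFamily_traceFamily [Infinite K] : IsIndependentFamily (traceFamily K) := by
  classical
  intro J t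
  obtain ⟨S, hS⟩ := eventually_atTop.1 (eventually_injOn_filter_mem t)
  let code (S' : Finset K) : Finset K × Finset (Finset K) :=
    (S', (t.filter (· ∈ J)).image fun X => S'.filter (· ∈ X))
  have hcode : Injective code := fun _ _ h => congrArg Prod.fst h
  refine ((Ici_infinite S).image hcode.injOn).mono ?_
  rintro _ ⟨S', hS', rfl⟩ X hX
  have hJt : (t.filter (· ∈ J) : Set (Set K)) ⊆ t := Finset.coe_subset.2 (Finset.filter_subset _ _)
  have := (hS S' hS').mem_image_iff hJt hX
  rw [← Finset.coe_image, Finset.mem_coe, Finset.mem_coe, Finset.mem_filter] at this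
  exact this.trans (and_iff_right hX)

theorem exists_isIndependentFamily {I K : Type u} [Infinite K] (h : #I ≤ 2 ^ #K) :
    ∃ A : I → Set K, IsIndependentFamily A := by
  obtain ⟨f⟩ : Nonempty (I ↪ Set K) := by rwa [← mk_set] at h
  obtain ⟨e⟩ : Nonempty (K ≃ Finset K × Finset (Finset K)) := by
    rw [← Cardinal.eq, mk_prod, lift_id, lift_id, mk_finset_of_infinite, mk_finset_of_infinite,
      mk_finset_of_infinite, mul_eq_self (aleph0_le_mk K)]
  exact ⟨_, (isIndependentFamily_traceFamily.comp_injective f.injective).preimage_equiv e⟩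

end IndependentFamily

/-! ### Spaces with generic points, scattered spaces, weight -/

section Specialization

variable {X : Type*} [TopologicalSpace X] {p : X}

theorem isPathConnected_of_isOpen_of_forall_specializes {U : Set X} (hU : IsOpen U)
    (hp : ∀ x, p ⤳ x) (hne : U.Nonempty) : IsPathConnected U :=
  let ⟨_, hx⟩ := hne
  have hpU : p ∈ U := (hp _).mem_open hU hx
  ⟨p, hpU, fun {_} hy => (hp _).joinedIn hpU hy⟩

theorem pathConnectedSpace_of_forall_specializes (hp : ∀ x, p ⤳ x) : PathConnectedSpace X :=
  pathConnectedSpace_iff_univ.2 <|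
    isPathConnected_of_isOpen_of_forall_specializes isOpen_univ hp ⟨p, mem_univ p⟩

theorem locallyPathConnectedSpace_of_forall_specializes (hp : ∀ x, p ⤳ x) :
    LocallyPathConnectedSpace X :=
  .of_bases (fun x => nhds_basis_opens x) fun x _ hU =>
    isPathConnected_of_isOpen_of_forall_specializes hU.2 hp ⟨x, hU.1⟩

theorem compactSpace_of_forall_specializes (hp : ∀ x, x ⤳ p) : CompactSpace X where
  isCompact_univ := fun f _ _ =>
    have hf : f ≤ 𝓝 p := fun _ hU =>
      mem_of_superset univ_mem fun x _ => mem_of_mem_nhds (hp x hU)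
    ⟨p, mem_univ p, .of_le_nhds hf⟩

end Specialization

/-- A homeomorphism between spaces whose specialization relation is a given order, as an order
isomorphism. Here `x ≤ y` stands for `x ⤳ y`, the opposite of the convention of
`specializationOrder`. -/
def orderIsoOfHomeomorph {X Y : Type*} [LE X] [LE Y] [TopologicalSpace X] [TopologicalSpace Y]
    (hX : ∀ x x' : X, x ⤳ x' ↔ x ≤ x') (hY : ∀ y y' : Y, y ⤳ y' ↔ y ≤ y') (e : X ≃ₜ Y) :
    X ≃o Y where
  toEquiv := e.toEquiv
  map_rel_iff' {x x'} := by
    rw [← hX, ← hY]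
    exact e.isInducing.specializes_iff

theorem topologicalSpace_eq_of_homeomorph {X : Type*} [LE X] (hX : ∀ (f : X ≃o X) x, f x = x)
    {t t' : TopologicalSpace X} (ht : ∀ x y, @Specializes X t x y ↔ x ≤ y)
    (ht' : ∀ x y, @Specializes X t' x y ↔ x ≤ y) (e : @Homeomorph X X t t') : t = t' := by
  have he : ⇑e = id := funext (hX (@orderIsoOfHomeomorph X X _ _ t t' ht ht' e))
  have hinduced := @IsInducing.eq_induced X X t t' _ (@Homeomorph.isInducing X X t t' e)
  rwa [he, induced_id] at hinduced

section

variable {X : Type} [TopologicalSpace X]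

theorem scattered_of_eventually_lt {W : Type*} [Preorder W] [WellFoundedLT W] (rank : X → W)
    (h : ∀ x, ∀ᶠ y in 𝓝 x, y ≠ x → rank y < rank x) : Scattered X := by
  intro S hS
  obtain ⟨x, hxS, hx⟩ := exists_minimalFor_of_wellFoundedLT (· ∈ S) rank hS
  obtain ⟨U, hU, hUo, hxU⟩ := eventually_nhds_iff.1 (h x)
  refine ⟨x, hxS, U, hUo, Subset.antisymm ?_ (singleton_subset_iff.2 ⟨hxU, hxS⟩)⟩
  rintro y ⟨hyU, hyS⟩
  by_contra hyx
  exact (hU y hyU hyx).not_ge (hx hyS (hU y hyU hyx).le)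

theorem tweight_le_mk {B : Set (Set X)} (hB : TopologicalSpace.IsTopologicalBasis B) :
    tweight X ≤ #B :=
  csInf_le' ⟨B, hB, rfl⟩

variable (X) in
theorem exists_isTopologicalBasis_mk_eq_tweight :
    ∃ B : Set (Set X), TopologicalSpace.IsTopologicalBasis B ∧ #B = tweight X :=
  csInf_mem (s := {c | ∃ B : Set (Set X), TopologicalSpace.IsTopologicalBasis B ∧ #B = c})
    ⟨_, _, TopologicalSpace.isTopologicalBasis_opens, rfl⟩

end

/-! ### The rigid poset -/

/-- The poset consisting of a chain `K`, a leaf above each point of the chain, a point `limit` above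
the whole chain, and a greatest element `apex`. -/
inductive LeafedChain (K : Type*)
  | chain (a : K)
  | leaf (a : K)
  | limit
  | apex

namespace LeafedChain

section LE

variable {K : Type*} [LE K] {a b : K} {x : LeafedChain K}

instance : LE (LeafedChain K) where
  le
    | chain a, chain b => a ≤ b
    | chain a, leaf b => a ≤ b
    | chain _, limit => True
    | leaf a, leaf b => a = b
    | limit, limit => True
    | _, apex => True
    | _, _ => False

@[simp] theorem chain_le_chain : chain a ≤ chain b ↔ a ≤ b := Iff.rfl

@[simp] theorem chain_le_leaf : chain a ≤ leaf b ↔ a ≤ b := Iff.rfl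

@[simp] theorem chain_le_limit : chain a ≤ limit := trivial

@[simp] theorem leaf_le_leaf : leaf a ≤ leaf b ↔ a = b := Iff.rfl

@[simp] theorem not_leaf_le_chain : ¬leaf a ≤ chain b := id

@[simp] theorem not_leaf_le_limit : ¬leaf a ≤ limit := id

@[simp] theorem limit_le_limit : (limit : LeafedChain K) ≤ limit := trivial

@[simp] theorem not_limit_le_chain : ¬limit ≤ chain a := id

@[simp] theorem not_limit_le_leaf : ¬limit ≤ leaf a := id

@[simp] theorem le_apex : x ≤ apex := by cases x <;> trivial

@[simp] theorem apex_le_iff : apex ≤ x ↔ x = apex := by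
  cases x <;> simp [LE.le]

end LE

section PartialOrder

variable {K : Type*} [PartialOrder K] {a b : K}

instance : PartialOrder (LeafedChain K) where
  le_refl x := by cases x <;> simp
  le_trans x y z hxy hyz := by
    cases x <;> cases y <;> cases z
    case chain.chain.chain | chain.chain.leaf => exact le_trans (α := K) hxy hyz
    all_goals simp_all
  le_antisymm x y hxy hyx := by
    cases x <;> cases y
    case chain.chain => exact congrArg chain (le_antisymm (α := K) hxy hyx)
    all_goals simp_all

theorem chain_lt_chain : chain a < chain b ↔ a < b := by
  simp only [lt_iff_le_not_ge, chain_le_chain]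

theorem chain_bot_le [OrderBot K] (x : LeafedChain K) : chain ⊥ ≤ x := by
  cases x <;> simp

/-- A strictly monotone rank which, in addition, puts `limit` above all leaves. -/
def rank : LeafedChain K → WithTop (WithTop (WithTop K))
  | chain a => a
  | leaf _ => ((⊤ : WithTop K) : WithTop (WithTop K))
  | limit => (⊤ : WithTop (WithTop K))
  | apex => ⊤

theorem rank_strictMono : StrictMono (rank (K := K)) := by
  intro x y hxy
  rw [lt_iff_le_not_ge] at hxy
  cases x <;> cases y <;> simp_all +contextual [rank, lt_iff_le_not_ge, eq_comm]

theorem orderIso_apply_apex (e : LeafedChain K ≃o LeafedChain K) : e apex = apex :=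
  le_apex.antisymm (e.symm_apply_le.1 le_apex)

theorem rank_leaf_lt_rank_limit (a : K) : rank (leaf a) < rank limit := by
  simp [rank]

end PartialOrder

/-- Every principal upper set off the chain is itself a chain. -/
theorem mem_range_chain_iff {K : Type*} [LinearOrder K] [NoMaxOrder K] {x : LeafedChain K} :
    x ∈ range chain ↔ ¬IsChain (· ≤ ·) (Ici x) := by
  constructor
  · rintro ⟨a, rfl⟩ h
    obtain ⟨b, hab⟩ := exists_gt a
    have hle : leaf a ≤ leaf b ∨ leaf b ≤ leaf a :=
      h.total (chain_le_leaf.2 le_rfl) (chain_le_leaf.2 hab.le)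
    simp only [leaf_le_leaf, hab.ne, hab.ne', or_self] at hle
  · contrapose!
    intro hx y hy z hz hyz
    cases x <;> cases y <;> cases z <;> simp_all

section Rigidity

variable {K : Type*} [LinearOrder K] [NoMaxOrder K]

theorem eq_of_forall_chain_le_iff {x y : LeafedChain K} (hx : x ∉ range chain)
    (hy : y ∉ range chain) (hx' : x ≠ apex) (hy' : y ≠ apex)
    (h : ∀ a, chain a ≤ x ↔ chain a ≤ y) : x = y := by
  have hunbounded (a : K) : ¬∀ b, b ≤ a := fun h => let ⟨b, hb⟩ := exists_gt a; (h b).not_gt hb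
  cases x <;> cases y
  case leaf.leaf a b => exact congrArg leaf (eq_of_forall_le_iff h)
  all_goals simp_all [-not_forall]

variable (e : LeafedChain K ≃o LeafedChain K)

theorem orderIso_apply_mem_range_chain_iff {x : LeafedChain K} :
    e x ∈ range chain ↔ x ∈ range chain := by
  have hIci : e '' Ici x = Ici (e x) := e.image_Ici x
  rw [mem_range_chain_iff, mem_range_chain_iff, not_iff_not, ← hIci]
  refine ⟨fun h => ?_, e.monotone.isChain_image⟩
  simpa only [e.symm_image_image] using e.symm.monotone.isChain_image h

theorem chain_le_orderIso_apply [WellFoundedLT K] (a : K) : chain a ≤ e (chain a) := by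
  choose f hf using fun a => (orderIso_apply_mem_range_chain_iff e).2 (mem_range_self a)
  have hf_mono : StrictMono f := fun a b hab => by
    rwa [← chain_lt_chain, hf, hf, e.lt_iff_lt, chain_lt_chain]
  rw [← hf, chain_le_chain]
  exact hf_mono.le_apply

theorem orderIso_apply_chain [WellFoundedLT K] (a : K) : e (chain a) = chain a :=
  (e.le_symm_apply.1 (chain_le_orderIso_apply e.symm a)).antisymm (chain_le_orderIso_apply e a)

theorem orderIso_apply [WellFoundedLT K] (x : LeafedChain K) : e x = x := by
  by_cases hx : x ∈ range chain
  · obtain ⟨a, rfl⟩ := hx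
    exact orderIso_apply_chain e a
  by_cases hx' : x = apex
  · rw [hx', orderIso_apply_apex]
  refine eq_of_forall_chain_le_iff ((orderIso_apply_mem_range_chain_iff e).not.2 hx) hx ?_ hx' ?_
  · rwa [← orderIso_apply_apex e, e.injective.ne_iff]
  · intro a
    nth_rw 1 [← orderIso_apply_chain e a, e.le_iff_le]

end Rigidity

/-- `LeafedChain K` as two copies of `K` and two further points. -/
def equivSum (K : Type*) : LeafedChain K ≃ (K ⊕ K) ⊕ Bool where
  toFun
    | chain a => .inl (.inl a)
    | leaf a => .inl (.inr a)
    | limit => .inr false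
    | apex => .inr true
  invFun
    | .inl (.inl a) => chain a
    | .inl (.inr a) => leaf a
    | .inr false => limit
    | .inr true => apex
  left_inv x := by cases x <;> rfl
  right_inv := by rintro ((a | a) | (_ | _)) <;> rfl

theorem mk_leafedChain (K : Type*) [Infinite K] : #(LeafedChain K) = #K := by
  have hK : ℵ₀ ≤ #K := aleph0_le_mk K
  have hBool : lift #Bool ≤ #K := by simpa using (ofNat_lt_aleph0.le.trans hK)
  rw [mk_congr (equivSum K)]
  simpa only [mk_sum, lift_id, lift_uzero, add_eq_self hK] using Cardinal.add_eq_left hK hBool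

/-! ### The topology of a filter -/

section LeafTopology

variable {K : Type*} [PartialOrder K] {F : Filter K} {S : Set K} {a : K} {x y : LeafedChain K}

/-- The topology on `LeafedChain K` associated with a filter `F` on `K`: open sets are the lower
sets which contain `F`-almost all leaves in case they contain `limit`. -/
abbrev leafTopology (F : Filter K) : TopologicalSpace (LeafedChain K) where
  IsOpen U := IsLowerSet U ∧ (limit ∈ U → ∀ᶠ a in F, leaf a ∈ U)
  isOpen_univ := ⟨isLowerSet_univ, fun _ => Eventually.of_forall fun _ => mem_univ _⟩
  isOpen_inter _ _ hU hV := ⟨hU.1.inter hV.1, fun h => (hU.2 h.1).and (hV.2 h.2)⟩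
  isOpen_sUnion _ h := ⟨isLowerSet_sUnion fun U hU => (h U hU).1,
    fun ⟨U, hU, hlimit⟩ => ((h U hU).2 hlimit).mono fun _ ha => ⟨U, hU, ha⟩⟩

/-- The basic neighbourhood of `limit` determined by a set of leaves. -/
def limitNhd (S : Set K) : Set (LeafedChain K) :=
  Iic limit ∪ leaf '' S

theorem limit_mem_limitNhd : limit ∈ limitNhd S :=
  .inl (mem_Iic.2 le_rfl)

theorem leaf_mem_limitNhd : leaf a ∈ limitNhd S ↔ a ∈ S := by
  simp [limitNhd]

theorem isOpen_leafTopology_Iic (hx : x ≠ limit) : IsOpen[leafTopology F] (Iic x) := by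
  refine ⟨isLowerSet_Iic x, fun hlimit => Eventually.of_forall fun a => ?_⟩
  cases x <;> simp_all

theorem isOpen_leafTopology_limitNhd (hS : S ∈ F) : IsOpen[leafTopology F] (limitNhd S) := by
  refine ⟨fun x y hyx hx => ?_, fun _ => mem_of_superset hS fun a => leaf_mem_limitNhd.2⟩
  cases x <;> cases y <;> simp_all [limitNhd]

theorem limitNhd_subset {U : Set (LeafedChain K)} (hU : IsOpen[leafTopology F] U)
    (hlimit : limit ∈ U) (hS : ∀ a ∈ S, leaf a ∈ U) : limitNhd S ⊆ U :=
  union_subset (fun _ hx => hU.1 hx hlimit) (image_subset_iff.2 hS)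

theorem specializes_of_le (h : x ≤ y) : @Specializes _ (leafTopology F) x y :=
  let := leafTopology F
  specializes_iff_forall_open.2 fun _ hU hy => hU.1 h hy

theorem specializes_iff_le (hF : F ≤ cofinite) :
    @Specializes _ (leafTopology F) x y ↔ x ≤ y := by
  let := leafTopology F
  refine ⟨fun h => ?_, specializes_of_le⟩
  by_cases hy : y = limit
  · subst hy
    have hx (S) (hS : S ∈ F) : x ∈ limitNhd S :=
      h.mem_open (isOpen_leafTopology_limitNhd hS) limit_mem_limitNhd
    obtain hx' | ⟨a, -, rfl⟩ := hx _ univ_mem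
    · exact hx'
    · have ha := leaf_mem_limitNhd.1 (hx _ (hF (finite_singleton a).compl_mem_cofinite))
      exact absurd rfl ha
  · exact h.mem_open (isOpen_leafTopology_Iic hy) (mem_Iic.2 le_rfl)

theorem comap_leaf_nhds_limit (F : Filter K) :
    comap leaf (@nhds _ (leafTopology F) limit) = F := by
  let := leafTopology F
  ext S
  rw [mem_comap]
  constructor
  · rintro ⟨N, hN, hNS⟩
    obtain ⟨U, hUN, hU, hlimit⟩ := mem_nhds_iff.1 hN
    exact mem_of_superset (hU.2 hlimit) fun a ha => hNS (hUN ha)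
  · exact fun hS => ⟨limitNhd S, (isOpen_leafTopology_limitNhd hS).mem_nhds limit_mem_limitNhd,
      fun a => leaf_mem_limitNhd.1⟩

theorem isTopologicalBasis_leafTopology {β : Type*} {V : β → Set K}
    (hV : F.HasBasis (fun _ => True) V) :
    @TopologicalSpace.IsTopologicalBasis _ (leafTopology F)
      (Iic '' {limit}ᶜ ∪ range (limitNhd ∘ V)) := by
  let := leafTopology F
  refine TopologicalSpace.isTopologicalBasis_of_isOpen_of_nhds ?_ fun x U hxU hU => ?_
  · rintro _ (⟨x, hx, rfl⟩ | ⟨b, rfl⟩)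
    · exact isOpen_leafTopology_Iic hx
    · exact isOpen_leafTopology_limitNhd (hV.mem_of_mem trivial)
  by_cases hx : x = limit
  · subst hx
    obtain ⟨b, -, hb⟩ := hV.mem_iff.1 (hU.2 hxU)
    exact ⟨_, .inr ⟨b, rfl⟩, limit_mem_limitNhd, limitNhd_subset hU hxU hb⟩
  · exact ⟨_, .inl ⟨x, hx, rfl⟩, mem_Iic.2 le_rfl, fun y hy => hU.1 hy hxU⟩

theorem t0Space_leafTopology (hF : F ≤ cofinite) : @T0Space _ (leafTopology F) :=
  let := leafTopology F
  ⟨fun _ _ h => ((specializes_iff_le hF).1 h.specializes).antisymm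
    ((specializes_iff_le hF).1 h.specializes')⟩

theorem compactSpace_leafTopology (F : Filter K) : @CompactSpace _ (leafTopology F) :=
  let := leafTopology F
  compactSpace_of_forall_specializes fun _ => specializes_of_le le_apex

theorem pathConnectedSpace_leafTopology [OrderBot K] (F : Filter K) :
    @PathConnectedSpace _ (leafTopology F) :=
  let := leafTopology F
  pathConnectedSpace_of_forall_specializes fun x => specializes_of_le (chain_bot_le x)

theorem locallyPathConnectedSpace_leafTopology [OrderBot K] (F : Filter K) :
    @LocallyPathConnectedSpace _ (leafTopology F) :=
  let := leafTopology F
  locallyPathConnectedSpace_of_forall_specializes fun x => specializes_of_le (chain_bot_le x)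

end LeafTopology

theorem scattered_leafTopology {K : Type} [PartialOrder K] [WellFoundedLT K] (F : Filter K) :
    @Scattered _ (leafTopology F) := by
  let := leafTopology F
  refine scattered_of_eventually_lt rank fun x => ?_
  by_cases hx : x = limit
  · subst hx
    have hopen : IsOpen (limitNhd (univ : Set K)) := isOpen_leafTopology_limitNhd univ_mem
    filter_upwards [hopen.mem_nhds limit_mem_limitNhd] with y hy hne
    rcases hy with hy | ⟨a, -, rfl⟩
    · exact rank_strictMono (lt_of_le_of_ne hy hne)
    · exact rank_leaf_lt_rank_limit a
  · filter_upwards [(isOpen_leafTopology_Iic hx).mem_nhds (mem_Iic.2 le_rfl)] with y hy hne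
    exact rank_strictMono (lt_of_le_of_ne hy hne)

theorem filter_eq_of_homeomorph {K : Type*} [LinearOrder K] [WellFoundedLT K] [NoMaxOrder K]
    {F G : Filter K} (hF : F ≤ cofinite) (hG : G ≤ cofinite)
    (e : @Homeomorph _ _ (leafTopology F) (leafTopology G)) : F = G := by
  have hFG : leafTopology F = leafTopology G :=
    topologicalSpace_eq_of_homeomorph (fun f => orderIso_apply f) (fun _ _ => specializes_iff_le hF)
      (fun _ _ => specializes_iff_le hG) e
  rw [← comap_leaf_nhds_limit F, hFG, comap_leaf_nhds_limit]

theorem tweight_leafTopology_le {K : Type} [PartialOrder K] [Infinite K] {F : Filter K} {β : Type}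
    {V : β → Set K} (hV : F.HasBasis (fun _ => True) V) :
    @tweight _ (leafTopology F) ≤ #K + #β := by
  let := leafTopology F
  calc tweight (LeafedChain K)
      ≤ #(Iic '' {limit}ᶜ ∪ range (limitNhd ∘ V) : Set (Set (LeafedChain K))) :=
        tweight_le_mk (isTopologicalBasis_leafTopology hV)
    _ ≤ #(Iic '' {limit}ᶜ : Set (Set (LeafedChain K))) + #(range (limitNhd ∘ V)) := mk_union_le _ _
    _ ≤ #K + #β :=
      add_le_add ((mk_image_le.trans (mk_set_le _)).trans_eq (mk_leafedChain K)) mk_range_le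

theorem mk_le_tweight_leafTopology {K I : Type} [PartialOrder K] [Infinite I] {A : I → Set K}
    (hA : IsIndependentFamily A) (J : Set I) :
    #I ≤ @tweight _ (leafTopology (patternFilter A J)) := by
  let := leafTopology (patternFilter A J)
  obtain ⟨B, hB, hBw⟩ := exists_isTopologicalBasis_mk_eq_tweight (LeafedChain K)
  have hbasis := (hB.nhds_hasBasis (a := limit)).comap leaf
  rw [comap_leaf_nhds_limit] at hbasis
  calc #I ≤ #{U | U ∈ B ∧ limit ∈ U} := hA.mk_le_of_hasBasis hbasis
    _ ≤ #B := mk_le_mk_of_subset (sep_subset B _)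
    _ = tweight (LeafedChain K) := hBw

theorem tweight_leafTopology_patternFilter {K I : Type} [PartialOrder K] [Infinite K] [Infinite I]
    {A : I → Set K} (hA : IsIndependentFamily A) (hKI : #K ≤ #I) (J : Set I) :
    @tweight _ (leafTopology (patternFilter A J)) = #I := by
  refine le_antisymm ?_ (mk_le_tweight_leafTopology hA J)
  have hI : ℵ₀ ≤ #I := aleph0_le_mk I
  calc @tweight _ (leafTopology (patternFilter A J))
      ≤ #K + #(Finset K × Finset I) := tweight_leafTopology_le (patternFilter_hasBasis A J)
    _ = #K + #K * #I := by simp only [mk_prod, lift_id, mk_finset_of_infinite]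
    _ = #I := by
      rw [mul_eq_right hI hKI (mk_ne_zero K), Cardinal.add_eq_right hI hKI]

end LeafedChain

open LeafedChain

theorem stmt17_general (κ lam : Cardinal) (hκ : ℵ₀ ≤ κ) (h1 : κ ≤ lam) (h2 : lam ≤ 2 ^ κ) :
    ExistsNonHomeoFamily (2 ^ lam) (fun X t =>
      letI := t
      PathConnectedSpace X ∧ LocallyPathConnectedSpace X ∧ CompactSpace X ∧ Scattered X ∧
        T0Space X ∧ #X = κ ∧ tweight X = lam) := by
  induction lam using Cardinal.inductionOn with | _ I
  have : Infinite I := infinite_iff.2 (hκ.trans h1)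
  have : Infinite κ.ord.ToType := infinite_iff.2 (by rwa [mk_ord_toType])
  have : NoMaxOrder κ.ord.ToType := Cardinal.noMaxOrder hκ
  let : OrderBot κ.ord.ToType := WellFoundedLT.toOrderBot _
  obtain ⟨A, hA⟩ : ∃ A : I → Set κ.ord.ToType, IsIndependentFamily A :=
    exists_isIndependentFamily (by rwa [mk_ord_toType])
  have hfree := patternFilter_le_cofinite A
  refine ⟨Set I, fun _ => LeafedChain κ.ord.ToType, fun J => leafTopology (patternFilter A J),
    mk_set, fun J => ⟨pathConnectedSpace_leafTopology _, locallyPathConnectedSpace_leafTopology _,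
      compactSpace_leafTopology _, scattered_leafTopology _, t0Space_leafTopology (hfree J), ?_,
      tweight_leafTopology_patternFilter hA (by rwa [mk_ord_toType]) J⟩,
    fun J J' hJJ' => ⟨fun e => hJJ' ?_⟩⟩
  · rw [mk_leafedChain, mk_ord_toType]
  · exact hA.patternFilter_injective (filter_eq_of_homeomorph (hfree J) (hfree J') e)

/-- Theorem 7: if `κ ≤ λ ≤ 2 ^ κ` (both infinite), then there exist two families
`C, L` of `2 ^ λ` mutually non-homeomorphic pathwise connected, scattered T₀-spaces of
cardinality `κ` and weight `λ` such that all members of `C` are compact, and, provided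
`κ ≤ 𝔠` or `2 ^ κ < 2 ^ λ`, all members of `L` are locally pathwise connected. -/
theorem stmt17 (κ lam : Cardinal) (hκ : ℵ₀ ≤ κ) (h1 : κ ≤ lam) (h2 : lam ≤ 2 ^ κ) :
    ExistsNonHomeoFamily (2 ^ lam) (fun X t =>
      letI := t
      PathConnectedSpace X ∧ Scattered X ∧ T0Space X ∧ #X = κ ∧ tweight X = lam ∧
        CompactSpace X)
    ∧ ExistsNonHomeoFamily (2 ^ lam) (fun X t =>
      letI := t
      PathConnectedSpace X ∧ Scattered X ∧ T0Space X ∧ #X = κ ∧ tweight X = lam ∧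
        ((κ ≤ Cardinal.continuum ∨ (2 : Cardinal) ^ κ < 2 ^ lam) →
          LocPathConnectedSpace X)) :=
  have h := stmt17_general κ lam hκ h1 h2
  ⟨h.mono fun _ _ ⟨hpath, _, hcompact, hscat, hT0, hcard, hw⟩ =>
      ⟨hpath, hscat, hT0, hcard, hw, hcompact⟩,
    h.mono fun _ _ ⟨hpath, hlocPath, _, hscat, hT0, hcard, hw⟩ =>
      ⟨hpath, hscat, hT0, hcard, hw, fun _ => hlocPath⟩⟩
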